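/- Fix an integer N ≥ 2 and L > 0, and set a := 1/N. For any initial data (x_i(0))_{i∈ℤ} with x_{i+N}(0) = x_i(0) + L and x_i(0) < x_{i+1}(0) for all i, the step-flow ODE system has a global-in-time C¹ solution x : [0,∞) → ℝ^ℤ with x(0) the given data; in particular, for all t ≥ 0 the solution satisfies x_{i+N}(t) = x_i(t) + L and x_i(t) < x_{i+1}(t), so no two steps ever collide and no step escapes to infinity in finite time. -/

import Mathlib

open Real Filter Topology

/-- The chemical potential `f_i` of a (periodic) step configuration `c : ℤ → ℝ`
(with `c (i+N) = c i + L`), `a := 1/N`: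
`f_i = −(2πa/L²)·Σ_{j≠i (one period)} cot(π(c j − c i)/L)
      + (1/(c_{i+1}−c_i) − 1/(c_i−c_{i−1})) + (a²/(c_{i+1}−c_i)³ − a²/(c_i−c_{i−1})³)`.
The lattice sum is taken over the period window `j ∈ {i+1, …, i+N−1}`, which by
`π`-periodicity of `cot` agrees with `Σ_{j=1,j≠i}^N` and makes `f_{i+N} = f_i` manifest. -/
noncomputable def fchem (N : ℕ) (L : ℝ) (c : ℤ → ℝ) (i : ℤ) : ℝ :=
  -(2 * π * (N:ℝ)⁻¹ / L ^ 2) *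
      (∑ j ∈ Finset.Ico (i + 1) (i + (N:ℤ)), Real.cot (π * (c j - c i) / L))
    + (1 / (c (i + 1) - c i) - 1 / (c i - c (i - 1)))
    + ((N:ℝ)⁻¹ ^ 2 / (c (i + 1) - c i) ^ 3 - (N:ℝ)⁻¹ ^ 2 / (c i - c (i - 1)) ^ 3)

/-- The right-hand side of the step-flow ODE system:
`dx_i/dt = (1/a)·[(f_{i+1}−f_i)/(x_{i+1}−x_i) − (f_i−f_{i−1})/(x_i−x_{i−1})]`, `a = 1/N`. -/
noncomputable def Fvel (N : ℕ) (L : ℝ) (c : ℤ → ℝ) (i : ℤ) : ℝ :=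
  (N:ℝ) * ((fchem N L c (i + 1) - fchem N L c i) / (c (i + 1) - c i)
    - (fchem N L c i - fchem N L c (i - 1)) / (c i - c (i - 1)))

/-!
On step configurations the system is a gradient flow in disguise: `fchem` is the gradient of an
energy, and summation by parts gives `dE/dt = -N ∑ (f_{i+1} - f_i)² / (x_{i+1} - x_i) ≤ 0`. The
energy is coercive in the smallest gap `g`, since its elastic part grows like `g⁻²` while the
attractive logarithmic interaction is at worst `-C g⁻¹`; hence bounded energy keeps the steps apart.
The energy does not see translations, but the sum of the positions over one period is conserved. So
energy plus squared position sum is a Lyapunov function whose sublevel sets are compact in the open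
set of step configurations, and this makes the solution global.
-/

/-! ### Global flows from a Lyapunov function -/

section IntegralCurve

variable {E : Type*} [NormedAddCommGroup E] [NormedSpace ℝ E]

open Set Manifold in
theorem exists_isIntegralCurve_of_hasCompactSupport [CompleteSpace E] {v : E → E}
    (hv : ContDiff ℝ 1 v) (hsupp : HasCompactSupport v) (u₀ : E) :
    ∃ γ : ℝ → E, γ 0 = u₀ ∧ IsIntegralCurve γ fun _ ↦ v := by
  obtain ⟨K, hK⟩ := hv.lipschitzWith_of_hasCompactSupport hsupp one_ne_zero
  obtain ⟨M, hM⟩ := hsupp.exists_bound_of_continuous hv.continuous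
  have hM' (u : E) : ‖v u‖ ≤ M.toNNReal := (hM u).trans (le_coe_toNNReal M)
  have exists_on_Ioo (a : ℝ) : ∃ γ : ℝ → E, γ 0 = u₀ ∧
      IsMIntegralCurveOn (I := 𝓘(ℝ, E)) γ v (Ioo (-a) a) := by
    let t₀ : Icc (-|a|) |a| := ⟨0, by simp⟩
    have picard : IsPicardLindelof (fun _ ↦ v) t₀ u₀ (M.toNNReal * |a|.toNNReal) 0 M.toNNReal K :=
      .of_time_independent (fun u _ ↦ hM' u) hK.lipschitzOnWith (by simp [t₀])
    obtain ⟨γ, hγ₀, hγ⟩ := picard.exists_eq_forall_mem_Icc_hasDerivWithinAt₀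
    have hsub : Ioo (-a) a ⊆ Icc (-|a|) |a| := Ioo_subset_Icc_self.trans
      (Icc_subset_Icc (neg_le_neg (le_abs_self a)) (le_abs_self a))
    exact ⟨γ, hγ₀, fun t ht ↦ ((hγ t (hsub ht)).mono hsub).hasFDerivWithinAt.hasMFDerivWithinAt⟩
  obtain ⟨γ, hγ₀, hγ⟩ := (exists_isMIntegralCurve_iff_exists_isMIntegralCurveOn_Ioo
    (contMDiff_vectorSpace_iff_contDiff.mpr hv) u₀).mpr exists_on_Ioo
  refine ⟨γ, hγ₀, fun t ↦ ?_⟩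
  rw [hasDerivAt_iff_hasFDerivAt]
  exact (hγ t).hasFDerivAt

theorem eq_const_of_isIntegralCurve {v : E → E} {K : NNReal} (hv : LipschitzWith K v)
    {γ : ℝ → E} (hγ : IsIntegralCurve γ fun _ ↦ v) {t₀ : ℝ} (hzero : v (γ t₀) = 0) (t : ℝ) :
    γ t = γ t₀ := by
  have hconst := isIntegralCurve_const (v := fun _ ↦ v) fun _ ↦ hzero
  exact congrFun (ODE_solution_unique_univ (v := fun _ ↦ v) (s := fun _ ↦ Set.univ)
    (fun _ ↦ hv.lipschitzOnWith) (fun t ↦ ⟨hγ t, trivial⟩) (fun t ↦ ⟨hconst t, trivial⟩) rfl) t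

variable {U : Set E}

theorem contDiff_smul_of_tsupport_subset {F : Type*} [NormedAddCommGroup F] [NormedSpace ℝ F]
    {n : WithTop ℕ∞} {χ : E → ℝ} {v : E → F}
    (hχ : ContDiff ℝ n χ) (hU : IsOpen U) (hχU : tsupport χ ⊆ U) (hv : ContDiffOn ℝ n v U) :
    ContDiff ℝ n fun u ↦ χ u • v u := by
  rw [← contMDiff_iff_contDiff]
  refine contMDiff_of_tsupport fun u hu ↦ ContDiffAt.contMDiffAt ?_
  have huU : u ∈ U := hχU (tsupport_smul_subset_left χ v hu)
  exact hχ.contDiffAt.smul (hv.contDiffAt (hU.mem_nhds huU))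

variable [FiniteDimensional ℝ E] {K : Set E}

open Manifold in
theorem exists_contDiff_eqOn_one_of_isCompact_subset_isOpen (hK : IsCompact K) (hU : IsOpen U)
    (hKU : K ⊆ U) :
    ∃ χ : E → ℝ, ContDiff ℝ 1 χ ∧ HasCompactSupport χ ∧ tsupport χ ⊆ U ∧ Set.EqOn χ 1 K ∧
      ∀ u, 0 ≤ χ u := by
  obtain ⟨K', hK', hKK', hK'U⟩ := exists_compact_between hK hU hKU
  obtain ⟨χ, hone, hzero, hmem⟩ :=
    exists_contMDiffMap_one_nhds_of_subset_interior 𝓘(ℝ, E) (n := 1) hK.isClosed hKK'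
  have htsupport : tsupport χ ⊆ K' :=
    closure_minimal (fun u hu ↦ by_contra fun hu' ↦ hu (hzero u hu')) hK'.isClosed
  exact ⟨χ, χ.contMDiff.contDiff, hK'.of_isClosed_subset (isClosed_tsupport _) htsupport,
    htsupport.trans hK'U, fun u hu ↦ hone.self_of_nhdsSet u hu, fun u ↦ (hmem u).1⟩

/-- The field is cut off outside the compact set. The cut-off flow cannot leave `U`, because points
outside `U` are stationary; so the Lyapunov function keeps decreasing along it, which confines it
to the set where the cutoff is inactive. -/
theorem exists_hasDerivAt_of_lyapunov {v : E → E} {V : E → ℝ} {u₀ : E} (hU : IsOpen U)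
    (hu₀ : u₀ ∈ U) (hv : ContDiffOn ℝ 1 v U) (hV : DifferentiableOn ℝ V U)
    (hdecr : ∀ u ∈ U, fderiv ℝ V u (v u) ≤ 0) (hK : IsCompact K) (hKU : K ⊆ U)
    (hsublevel : ∀ u ∈ U, V u ≤ V u₀ → u ∈ K) :
    ∃ γ : ℝ → E, γ 0 = u₀ ∧ ∀ t, 0 ≤ t → γ t ∈ U ∧ HasDerivAt γ (v (γ t)) t := by
  obtain ⟨χ, hχ, hχsupp, hχU, hχone, hχnonneg⟩ :=
    exists_contDiff_eqOn_one_of_isCompact_subset_isOpen hK hU hKU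
  set w : E → E := fun u ↦ χ u • v u
  have hw : ContDiff ℝ 1 w := contDiff_smul_of_tsupport_subset hχ hU hχU hv
  have hwsupp : HasCompactSupport w := hχsupp.smul_right
  obtain ⟨C, hC⟩ := hw.lipschitzWith_of_hasCompactSupport hwsupp one_ne_zero
  obtain ⟨γ, hγ₀, hγ⟩ := exists_isIntegralCurve_of_hasCompactSupport hw hwsupp u₀
  have hγU (t : ℝ) : γ t ∈ U := by
    by_contra ht
    have hzero : w (γ t) = 0 := by simp [w, image_eq_zero_of_notMem_tsupport (mt (@hχU _) ht)]
    rw [← eq_const_of_isIntegralCurve hC hγ hzero 0, hγ₀] at ht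
    exact ht hu₀
  have hVderiv (t : ℝ) : HasDerivAt (V ∘ γ) (fderiv ℝ V (γ t) (w (γ t))) t :=
    (hV.differentiableAt (hU.mem_nhds (hγU t))).hasFDerivAt.comp_hasDerivAt t (hγ t)
  have hVanti : Antitone (V ∘ γ) :=
    antitone_of_hasDerivAt_nonpos hVderiv fun t ↦ by
      simpa [w] using mul_nonpos_of_nonneg_of_nonpos (hχnonneg _) (hdecr _ (hγU t))
  refine ⟨γ, hγ₀, fun t ht ↦ ⟨hγU t, ?_⟩⟩
  have hγK : γ t ∈ K := hsublevel _ (hγU t) (by simpa [hγ₀] using hVanti ht)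
  simpa [w, hχone hγK] using hγ t

end IntegralCurve

/-! ### Sums over a period -/

section PeriodicSums

variable {N : ℕ}

theorem map_emod_of_periodic {α : Type*} {p : ℤ → α} (hp : Function.Periodic p (N : ℤ)) (i : ℤ) :
    p (i % N) = p i := by
  rw [Int.emod_def, mul_comm, ← smul_eq_mul, hp.sub_zsmul_eq]

theorem forall_of_forall_mem_Ico_of_periodic [NeZero N] {P : ℤ → Prop}
    (hP : Function.Periodic P (N : ℤ)) (h : ∀ i ∈ Finset.Ico (0 : ℤ) N, P i) (i : ℤ) : P i := by
  have hN : (0 : ℤ) < N := by exact_mod_cast NeZero.pos N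
  rw [← map_emod_of_periodic hP i]
  exact h _ (Finset.mem_Ico.mpr ⟨Int.emod_nonneg _ hN.ne', Int.emod_lt_of_pos _ hN⟩)

section Monoid

variable {G : Type*} [AddCommMonoid G] {p : ℤ → G}

theorem sum_Ico_add_of_periodic (hp : Function.Periodic p (N : ℤ)) (k : ℤ) :
    ∑ i ∈ Finset.Ico k (k + N), p i = ∑ i ∈ Finset.Ico (0 : ℤ) N, p i := by
  have himage := Int.image_Ico_emod k N (Int.natCast_nonneg N)
  have hinj : Set.InjOn (· % (N : ℤ)) (Finset.Ico k (k + N)) := by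
    rw [← Finset.card_image_iff, himage]
    simp
  rw [← himage, Finset.sum_image hinj]
  exact Finset.sum_congr rfl fun i _ ↦ (map_emod_of_periodic hp i).symm

theorem sum_Ico_shift_of_periodic (hp : Function.Periodic p (N : ℤ)) (k : ℤ) :
    ∑ i ∈ Finset.Ico (0 : ℤ) N, p (i + k) = ∑ i ∈ Finset.Ico (0 : ℤ) N, p i := by
  rw [Finset.sum_Ico_add', ← sum_Ico_add_of_periodic hp k, zero_add, add_comm k]

end Monoid

variable {G : Type*} [AddCommGroup G] {p : ℤ → G}

theorem sum_smul_sub_of_periodic {R : Type*} [Ring R] [Module R G] {q : ℤ → R}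
    (hq : Function.Periodic q (N : ℤ)) (hp : Function.Periodic p (N : ℤ)) :
    ∑ i ∈ Finset.Ico (0 : ℤ) N, q i • (p (i + 1) - p i) =
      ∑ i ∈ Finset.Ico (0 : ℤ) N, (q (i - 1) - q i) • p i := by
  have hshift := sum_Ico_shift_of_periodic (p := fun i ↦ q (i - 1) • p i) (N := N)
    (fun i ↦ by simp only [add_sub_right_comm, hq (i - 1), hp i]) 1
  simp only [add_sub_cancel_right] at hshift
  simp only [smul_sub, sub_smul, Finset.sum_sub_distrib, hshift]

theorem sum_sum_smul_sub_of_antisymm {ι R : Type*} [Ring R] [Module R G] (s : Finset ι)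
    {κ : ι → ι → R} (hκ : ∀ i j, κ j i = -κ i j) (p : ι → G) :
    ∑ i ∈ s, ∑ j ∈ s, κ i j • (p j - p i) = (-2 : R) • ∑ i ∈ s, (∑ j ∈ s, κ i j) • p i := by
  have hswap : ∑ i ∈ s, ∑ j ∈ s, κ i j • p j = -∑ i ∈ s, ∑ j ∈ s, κ i j • p i := by
    rw [Finset.sum_comm, ← Finset.sum_neg_distrib]
    refine Finset.sum_congr rfl fun i _ ↦ ?_
    rw [← Finset.sum_neg_distrib]
    exact Finset.sum_congr rfl fun j _ ↦ by rw [hκ i j, neg_smul]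
  simp only [smul_sub, Finset.sum_sub_distrib, hswap, Finset.sum_smul]
  rw [neg_smul, two_smul]; abel

end PeriodicSums

section ScalarFacts

variable {L r : ℝ}

theorem periodic_cot_pi_mul_div (hL : L ≠ 0) : Function.Periodic (fun r ↦ cot (π * r / L)) L := by
  intro r
  have hshift : π * (r + L) / L = π * r / L + π := by field_simp
  simp only [hshift, cot_eq_cos_div_sin, sin_add_pi, cos_add_pi, neg_div_neg_eq]

theorem sin_pi_mul_div_ne_zero (hr : r ≠ 0) (hrL : |r| < L) : sin (π * r / L) ≠ 0 := by
  have hL : 0 < L := (abs_nonneg r).trans_lt hrL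
  obtain ⟨hlower, hupper⟩ := abs_lt.mp hrL
  have hlower' : -π < π * r / L := by rw [lt_div_iff₀ hL]; nlinarith [pi_pos]
  have hupper' : π * r / L < π := by rw [div_lt_iff₀ hL]; nlinarith [pi_pos]
  rw [Ne, sin_eq_zero_iff_of_lt_of_lt hlower' hupper']
  exact div_ne_zero (mul_ne_zero pi_ne_zero hr) hL.ne'

theorem hasDerivAt_log_sin_pi_mul_div (hr : sin (π * r / L) ≠ 0) :
    HasDerivAt (fun r ↦ log (sin (π * r / L))) (π / L * cot (π * r / L)) r := by
  have hlin : HasDerivAt (fun r ↦ π * r / L) (π / L) r := by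
    simpa using ((hasDerivAt_id r).const_mul π).div_const L
  convert (hlin.sin).log hr using 1
  rw [cot_eq_cos_div_sin]
  ring

theorem two_mul_div_le_sin_pi_mul_div {δ : ℝ} (hδ : 0 < δ) (hδr : δ ≤ r) (hrL : r ≤ L - δ) :
    2 * δ / L ≤ sin (π * r / L) := by
  have hL : 0 < L := by linarith
  have half {s : ℝ} (hδs : δ ≤ s) (hsL : s ≤ L / 2) : 2 * δ / L ≤ sin (π * s / L) :=
    calc 2 * δ / L ≤ 2 / π * (π * s / L) := by
          rw [show 2 / π * (π * s / L) = 2 * s / L by field_simp]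
          gcongr
      _ ≤ sin (π * s / L) := mul_le_sin (by have := hδ.trans_le hδs; positivity) (by
          rw [div_le_div_iff₀ hL two_pos]; nlinarith [pi_pos])
  rcases le_total r (L / 2) with hr | hr
  · exact half hδr hr
  · have hreflect : π * r / L = π - π * (L - r) / L := by field_simp; ring
    rw [hreflect, sin_pi_sub]
    exact half (by linarith) (by linarith)

theorem le_one_add_div_of_mul_sq_le {A B D s : ℝ} (hA : 0 < A) (hB : 0 ≤ B)
    (h : A * s ^ 2 ≤ B * s + D) : s ≤ 1 + (B + |D|) / A := by
  rcases le_total s 1 with hs | hs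
  · have : 0 ≤ (B + |D|) / A := by positivity
    linarith
  · have hbound : A * s ≤ B + |D| := by
      nlinarith [le_abs_self D, abs_nonneg D]
    have := (le_div_iff₀' hA).mpr hbound
    linarith

/-- The short-range energy of two neighbouring steps at distance `r`; `b` weighs the elastic
inverse-square repulsion against the logarithmic term. -/
noncomputable def gapPotential (b r : ℝ) : ℝ := -log r + b / 2 * r⁻¹ ^ 2

/-- The repulsive force between two neighbouring steps at distance `r`, that is, minus the
derivative of `gapPotential b`. -/
noncomputable def gapForce (b r : ℝ) : ℝ := 1 / r + b / r ^ 3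

theorem hasDerivAt_gapPotential (b : ℝ) (hr : r ≠ 0) :
    HasDerivAt (gapPotential b) (-gapForce b r) r := by
  have hrepulsion := ((hasDerivAt_inv hr).fun_pow 2).const_mul (b / 2)
  refine ((hasDerivAt_log hr).neg.add hrepulsion).congr_deriv ?_
  rw [gapForce, pow_one]
  field_simp
  ring

end ScalarFacts

/-! ### Step configurations -/

theorem fchem_eq (N : ℕ) (L : ℝ) (c : ℤ → ℝ) (i : ℤ) :
    fchem N L c i =
      -(2 * π * (N : ℝ)⁻¹ / L ^ 2) * ∑ j ∈ Finset.Ico (i + 1) (i + N), cot (π * (c j - c i) / L) +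
        (gapForce ((N : ℝ)⁻¹ ^ 2) (c (i + 1) - c i) -
          gapForce ((N : ℝ)⁻¹ ^ 2) (c (i - 1 + 1) - c (i - 1))) := by
  rw [fchem, gapForce, gapForce, sub_add_cancel]
  ring

/-- The flux between the steps `i` and `i + 1`, whose discrete divergence drives step `i`. -/
noncomputable def stepFlux (N : ℕ) (L : ℝ) (c : ℤ → ℝ) (i : ℤ) : ℝ :=
  (fchem N L c (i + 1) - fchem N L c i) / (c (i + 1) - c i)

theorem Fvel_eq (N : ℕ) (L : ℝ) (c : ℤ → ℝ) (i : ℤ) :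
    Fvel N L c i = N * (stepFlux N L c i - stepFlux N L c (i - 1)) := by
  rw [Fvel, stepFlux, stepFlux, sub_add_cancel]

/-- Step configurations: strictly increasing bi-infinite sequences that advance by `L` every `N`
steps. Monotonicity is required between neighbours only; see `IsStepConfig.strictMono`. -/
structure IsStepConfig (N : ℕ) (L : ℝ) (c : ℤ → ℝ) : Prop where
  apply_add_period : ∀ i, c (i + N) = c i + L
  lt_apply_add_one : ∀ i, c i < c (i + 1)

theorem periodic_sub_of_apply_add_period {N : ℕ} {L : ℝ} {c : ℤ → ℝ}
    (hc : ∀ i, c (i + N) = c i + L) :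
    Function.Periodic (fun i ↦ c (i + 1) - c i) (N : ℤ) := fun i ↦ by
  beta_reduce
  rw [add_right_comm, hc, hc, add_sub_add_right_eq_sub]

theorem isStepConfig_iff_forall_mem_Ico {N : ℕ} [NeZero N] {L : ℝ} {c : ℤ → ℝ}
    (hc : ∀ i, c (i + N) = c i + L) :
    IsStepConfig N L c ↔ ∀ i ∈ Finset.Ico (0 : ℤ) N, c i < c (i + 1) := by
  refine ⟨fun h i _ ↦ h.lt_apply_add_one i, fun h ↦ ⟨hc, fun i ↦ sub_pos.mp ?_⟩⟩
  exact forall_of_forall_mem_Ico_of_periodic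
    ((periodic_sub_of_apply_add_period hc).comp (0 < ·)) (fun i hi ↦ sub_pos.mpr (h i hi)) i

namespace IsStepConfig

variable {N : ℕ} {L : ℝ} {c : ℤ → ℝ} {i j : ℤ}

theorem strictMono (hc : IsStepConfig N L c) : StrictMono c :=
  strictMono_int_of_lt_succ hc.lt_apply_add_one

theorem gap_pos (hc : IsStepConfig N L c) (i : ℤ) : 0 < c (i + 1) - c i :=
  sub_pos.mpr (hc.lt_apply_add_one i)

theorem periodic_gap (hc : IsStepConfig N L c) :
    Function.Periodic (fun i ↦ c (i + 1) - c i) (N : ℤ) :=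
  periodic_sub_of_apply_add_period hc.apply_add_period

theorem sub_lt_period (hc : IsStepConfig N L c) (hij : j < i + N) : c j - c i < L := by
  have := hc.strictMono hij
  rw [hc.apply_add_period] at this
  linarith

theorem abs_sub_lt_period (hc : IsStepConfig N L c) (hi : i ∈ Finset.Ico (0 : ℤ) N)
    (hj : j ∈ Finset.Ico (0 : ℤ) N) : |c j - c i| < L := by
  rw [Finset.mem_Ico] at hi hj
  exact abs_sub_lt_iff.mpr ⟨hc.sub_lt_period (by lia), hc.sub_lt_period (by lia)⟩

theorem sin_ne_zero (hc : IsStepConfig N L c) (hi : i ∈ Finset.Ico (0 : ℤ) N)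
    (hj : j ∈ Finset.Ico (0 : ℤ) N) (hij : i ≠ j) : sin (π * (c j - c i) / L) ≠ 0 :=
  sin_pi_mul_div_ne_zero (sub_ne_zero.mpr (hc.strictMono.injective.ne hij.symm))
    (hc.abs_sub_lt_period hi hj)

variable [NeZero N]

theorem period_pos (hc : IsStepConfig N L c) : 0 < L := by
  have := hc.sub_lt_period (i := 0) (j := 0) (by simpa using NeZero.pos N)
  simpa using this

theorem periodic_cot (hc : IsStepConfig N L c) (i : ℤ) :
    Function.Periodic (fun j ↦ cot (π * (c j - c i) / L)) (N : ℤ) := fun j ↦ by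
  simpa only [hc.apply_add_period, add_sub_right_comm] using
    periodic_cot_pi_mul_div hc.period_pos.ne' (c j - c i)

/-- The diagonal term `j = i` contributes `cot 0`, which is `0` in Lean. -/
theorem sum_Ico_cot_eq (hc : IsStepConfig N L c) (i : ℤ) :
    ∑ j ∈ Finset.Ico (i + 1) (i + N), cot (π * (c j - c i) / L) =
      ∑ j ∈ Finset.Ico (0 : ℤ) N, cot (π * (c j - c i) / L) := by
  have hi : i < i + N := by simpa using NeZero.pos N
  rw [← sum_Ico_add_of_periodic (hc.periodic_cot i) i,
    ← Finset.insert_Ico_add_one_left_eq_Ico hi, Finset.sum_insert (by simp)]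
  simp [cot_eq_cos_div_sin]

theorem fchem_eq_sum_Ico_zero (hc : IsStepConfig N L c) (i : ℤ) :
    fchem N L c i =
      -(2 * π * (N : ℝ)⁻¹ / L ^ 2) * ∑ j ∈ Finset.Ico (0 : ℤ) N, cot (π * (c j - c i) / L) +
        (gapForce ((N : ℝ)⁻¹ ^ 2) (c (i + 1) - c i) -
          gapForce ((N : ℝ)⁻¹ ^ 2) (c (i - 1 + 1) - c (i - 1))) := by
  rw [fchem_eq, hc.sum_Ico_cot_eq]

theorem periodic_fchem (hc : IsStepConfig N L c) : Function.Periodic (fchem N L c) (N : ℤ) := by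
  intro i
  have hcot (j : ℤ) : cot (π * (c j - c (i + N)) / L) = cot (π * (c j - c i) / L) := by
    rw [hc.apply_add_period, ← sub_sub]
    exact (periodic_cot_pi_mul_div hc.period_pos.ne').sub_eq (c j - c i)
  have hgap := hc.periodic_gap
  simp only [hc.fchem_eq_sum_Ico_zero, hcot, hgap i, add_sub_right_comm i, hgap (i - 1)]

theorem periodic_stepFlux (hc : IsStepConfig N L c) :
    Function.Periodic (stepFlux N L c) (N : ℤ) := fun i ↦ by
  have hgap : c (i + N + 1) - c (i + N) = c (i + 1) - c i := hc.periodic_gap i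
  rw [stepFlux, stepFlux, hgap, add_right_comm, hc.periodic_fchem, hc.periodic_fchem]

theorem periodic_Fvel (hc : IsStepConfig N L c) : Function.Periodic (Fvel N L c) (N : ℤ) := by
  intro i
  rw [Fvel_eq, Fvel_eq, add_sub_right_comm, hc.periodic_stepFlux, hc.periodic_stepFlux]

end IsStepConfig

/-! ### The energy and its dissipation -/

/-- The free energy of one period: the logarithmic interaction of all pairs of steps plus the
short-range energy of neighbours. Since `log` is even and `log 0 = 0` in Lean, the summands are
`log |sin _|` and the diagonal `i = j` contributes nothing. -/
noncomputable def stepEnergy (N : ℕ) (L : ℝ) (c : ℤ → ℝ) : ℝ :=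
  (N : ℝ)⁻¹ / L * ∑ i ∈ Finset.Ico (0 : ℤ) N, ∑ j ∈ Finset.Ico (0 : ℤ) N,
      log (sin (π * (c j - c i) / L)) +
    ∑ i ∈ Finset.Ico (0 : ℤ) N, gapPotential ((N : ℝ)⁻¹ ^ 2) (c (i + 1) - c i)

/-- The energy together with the squared sum of the step positions. The latter is constant along
the flow, and it excludes the translations under which the energy is invariant. -/
noncomputable def stepLyapunov (N : ℕ) (L : ℝ) (c : ℤ → ℝ) : ℝ :=
  stepEnergy N L c + (∑ i ∈ Finset.Ico (0 : ℤ) N, c i) ^ 2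

theorem stepEnergy_le_stepLyapunov (N : ℕ) (L : ℝ) (c : ℤ → ℝ) :
    stepEnergy N L c ≤ stepLyapunov N L c :=
  le_add_of_nonneg_right (sq_nonneg _)

section Gradient

variable {F : Type*} [NormedAddCommGroup F] [NormedSpace ℝ F] {N : ℕ} {L : ℝ}
  {c : F → ℤ → ℝ} {c' : ℤ → F →L[ℝ] ℝ} {u : F}

theorem hasFDerivAt_sum_log_sin (hc : IsStepConfig N L (c u))
    (hderiv : ∀ i, HasFDerivAt (c · i) (c' i) u) :
    HasFDerivAt (fun u ↦ ∑ i ∈ Finset.Ico (0 : ℤ) N, ∑ j ∈ Finset.Ico (0 : ℤ) N,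
        log (sin (π * (c u j - c u i) / L)))
      ((-2 : ℝ) • ∑ i ∈ Finset.Ico (0 : ℤ) N,
        (∑ j ∈ Finset.Ico (0 : ℤ) N, π / L * cot (π * (c u j - c u i) / L)) • c' i) u := by
  have hantisymm (i j : ℤ) : π / L * cot (π * (c u i - c u j) / L) =
      -(π / L * cot (π * (c u j - c u i) / L)) := by
    rw [← neg_sub, mul_neg, neg_div, cot_eq_cos_div_sin, cot_eq_cos_div_sin, cos_neg, sin_neg]
    ring
  rw [← sum_sum_smul_sub_of_antisymm (Finset.Ico (0 : ℤ) N) hantisymm c']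
  refine .fun_sum fun i hi ↦ .fun_sum fun j hj ↦ ?_
  rcases eq_or_ne i j with rfl | hij
  · simpa using hasFDerivAt_const (0 : ℝ) u
  · exact (hasDerivAt_log_sin_pi_mul_div (hc.sin_ne_zero hi hj hij)).comp_hasFDerivAt
      (f := fun u ↦ c u j - c u i) u ((hderiv j).sub (hderiv i))

theorem hasFDerivAt_sum_gapPotential (b : ℝ) (hc : IsStepConfig N L (c u))
    (hderiv : ∀ i, HasFDerivAt (c · i) (c' i) u) (hc' : Function.Periodic c' (N : ℤ)) :
    HasFDerivAt (fun u ↦ ∑ i ∈ Finset.Ico (0 : ℤ) N, gapPotential b (c u (i + 1) - c u i))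
      (∑ i ∈ Finset.Ico (0 : ℤ) N, (gapForce b (c u (i + 1) - c u i) -
        gapForce b (c u (i - 1 + 1) - c u (i - 1))) • c' i) u := by
  have hparts := sum_smul_sub_of_periodic (hc.periodic_gap.comp fun r ↦ -gapForce b r) hc'
  simp only [Function.comp_apply, neg_sub_neg] at hparts
  rw [← hparts]
  exact .fun_sum fun i _ ↦ (hasDerivAt_gapPotential b (hc.gap_pos i).ne').comp_hasFDerivAt
    (f := fun u ↦ c u (i + 1) - c u i) u ((hderiv (i + 1)).sub (hderiv i))

theorem hasFDerivAt_stepEnergy [NeZero N] (hc : IsStepConfig N L (c u))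
    (hderiv : ∀ i, HasFDerivAt (c · i) (c' i) u) (hc' : Function.Periodic c' (N : ℤ)) :
    HasFDerivAt (fun u ↦ stepEnergy N L (c u))
      (∑ i ∈ Finset.Ico (0 : ℤ) N, fchem N L (c u) i • c' i) u := by
  refine (((hasFDerivAt_sum_log_sin hc hderiv).const_mul ((N : ℝ)⁻¹ / L)).add
    (hasFDerivAt_sum_gapPotential ((N : ℝ)⁻¹ ^ 2) hc hderiv hc')).congr_fderiv ?_
  simp only [Finset.smul_sum, ← Finset.sum_add_distrib]
  refine Finset.sum_congr rfl fun i _ ↦ ?_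
  rw [hc.fchem_eq_sum_Ico_zero, add_smul, ← Finset.mul_sum, smul_smul, smul_smul]
  congr 2
  ring

theorem hasFDerivAt_stepLyapunov [NeZero N] (hc : IsStepConfig N L (c u))
    (hderiv : ∀ i, HasFDerivAt (c · i) (c' i) u) (hc' : Function.Periodic c' (N : ℤ)) :
    HasFDerivAt (fun u ↦ stepLyapunov N L (c u))
      (∑ i ∈ Finset.Ico (0 : ℤ) N,
        (fchem N L (c u) i + 2 * ∑ j ∈ Finset.Ico (0 : ℤ) N, c u j) • c' i) u := by
  have hsq := (HasFDerivAt.fun_sum fun i (_ : i ∈ Finset.Ico (0 : ℤ) N) ↦ hderiv i).pow 2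
  refine ((hasFDerivAt_stepEnergy hc hderiv hc').add hsq).congr_fderiv ?_
  simp [add_smul, Finset.sum_add_distrib, ← Finset.smul_sum]

end Gradient

namespace IsStepConfig

variable {N : ℕ} [NeZero N] {L : ℝ} {c : ℤ → ℝ}

theorem sum_Fvel_eq_zero (hc : IsStepConfig N L c) :
    ∑ i ∈ Finset.Ico (0 : ℤ) N, Fvel N L c i = 0 := by
  have hshift := sum_Ico_shift_of_periodic hc.periodic_stepFlux (-1)
  simp only [Fvel_eq, ← Finset.mul_sum, Finset.sum_sub_distrib, sub_eq_add_neg _ (1 : ℤ), hshift,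
    sub_self, mul_zero]

theorem sum_fchem_mul_Fvel_eq (hc : IsStepConfig N L c) :
    ∑ i ∈ Finset.Ico (0 : ℤ) N, fchem N L c i * Fvel N L c i =
      -(N * ∑ i ∈ Finset.Ico (0 : ℤ) N, (c (i + 1) - c i) * stepFlux N L c i ^ 2) := by
  have hparts := sum_smul_sub_of_periodic hc.periodic_stepFlux hc.periodic_fchem
  have hflux (i : ℤ) : fchem N L c (i + 1) - fchem N L c i =
      (c (i + 1) - c i) * stepFlux N L c i :=
    (mul_div_cancel₀ _ (hc.gap_pos i).ne').symm
  calc ∑ i ∈ Finset.Ico (0 : ℤ) N, fchem N L c i * Fvel N L c i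
      = -(N * ∑ i ∈ Finset.Ico (0 : ℤ) N,
          (stepFlux N L c (i - 1) - stepFlux N L c i) • fchem N L c i) := by
        rw [Finset.mul_sum, ← Finset.sum_neg_distrib]
        refine Finset.sum_congr rfl fun i _ ↦ ?_
        rw [Fvel_eq, smul_eq_mul]
        ring
    _ = -(N * ∑ i ∈ Finset.Ico (0 : ℤ) N, (c (i + 1) - c i) * stepFlux N L c i ^ 2) := by
        rw [← hparts]
        simp only [hflux, smul_eq_mul]
        congr! 3 with i
        ring

theorem sum_fchem_mul_Fvel_nonpos (hc : IsStepConfig N L c) :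
    ∑ i ∈ Finset.Ico (0 : ℤ) N, fchem N L c i * Fvel N L c i ≤ 0 := by
  rw [hc.sum_fchem_mul_Fvel_eq, neg_nonpos]
  exact mul_nonneg N.cast_nonneg <| Finset.sum_nonneg fun i _ ↦
    mul_nonneg (hc.gap_pos i).le (sq_nonneg _)

end IsStepConfig

/-! ### Coercivity -/

theorem abs_le_abs_sum_add {ι : Type*} {s : Finset ι} {f : ι → ℝ} {i : ι} {D : ℝ} (hi : i ∈ s)
    (hD : ∀ j ∈ s, |f j - f i| ≤ D) : |f i| ≤ |∑ j ∈ s, f j| + D := by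
  have hcard : (1 : ℝ) ≤ s.card := by exact_mod_cast Finset.card_pos.mpr ⟨i, hi⟩
  have hdev : |∑ j ∈ s, f j - s.card * f i| ≤ s.card * D := by
    rw [← nsmul_eq_mul, ← nsmul_eq_mul, ← Finset.sum_const, ← Finset.sum_sub_distrib]
    exact (Finset.abs_sum_le_sum_abs _ _).trans (Finset.sum_le_card_nsmul _ _ _ hD)
  have hscaled : s.card * |f i| ≤ |∑ j ∈ s, f j| + s.card * D := by
    have htri := abs_sub_abs_le_abs_sub (s.card * f i) (∑ j ∈ s, f j)
    rw [abs_sub_comm, abs_mul, Nat.abs_cast] at htri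
    linarith
  refine le_of_mul_le_mul_left (hscaled.trans ?_) (one_pos.trans_le hcard)
  rw [mul_add]
  gcongr
  exact le_mul_of_one_le_left (abs_nonneg _) hcard

namespace IsStepConfig

variable {N : ℕ} {L : ℝ} {c : ℤ → ℝ} {δ : ℝ} {i j : ℤ}

theorem le_sub_of_le_gap (hc : IsStepConfig N L c) (hgap : ∀ i, δ ≤ c (i + 1) - c i)
    (hij : i < j) : δ ≤ c j - c i :=
  (hgap i).trans (sub_le_sub_right (hc.strictMono.monotone hij) _)

theorem neg_div_le_log_sin (hc : IsStepConfig N L c) (hδ : 0 < δ)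
    (hgap : ∀ i, δ ≤ c (i + 1) - c i) (hi : i ∈ Finset.Ico (0 : ℤ) N)
    (hj : j ∈ Finset.Ico (0 : ℤ) N) : -(L / (2 * δ)) ≤ log (sin (π * (c j - c i) / L)) := by
  have hL : 0 < L := (abs_nonneg _).trans_lt (hc.abs_sub_lt_period hi hj)
  wlog hij : i ≤ j generalizing i j
  · have hsymm : log (sin (π * (c j - c i) / L)) = log (sin (π * (c i - c j) / L)) := by
      rw [← neg_sub, mul_neg, neg_div, sin_neg, log_neg_eq_log]
    exact hsymm ▸ this hj hi (le_of_not_ge hij)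
  rcases hij.eq_or_lt with rfl | hlt
  · simpa using by positivity
  have hupper : c j - c i ≤ L - δ := by
    rw [Finset.mem_Ico] at hi hj
    have := hc.le_sub_of_le_gap hgap (show j < i + N by lia)
    rw [hc.apply_add_period] at this
    linarith
  have hsin := two_mul_div_le_sin_pi_mul_div hδ (hc.le_sub_of_le_gap hgap hlt) hupper
  have hδL : 0 < 2 * δ / L := by positivity
  calc -(L / (2 * δ)) ≤ 1 - (2 * δ / L)⁻¹ := by rw [inv_div]; linarith
    _ ≤ log (2 * δ / L) := one_sub_inv_le_log_of_pos hδL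
    _ ≤ log (sin (π * (c j - c i) / L)) := log_le_log hδL hsin

theorem le_sum_log_sin (hc : IsStepConfig N L c) (hδ : 0 < δ)
    (hgap : ∀ i, δ ≤ c (i + 1) - c i) :
    -(N ^ 2 * (L / (2 * δ))) ≤ ∑ i ∈ Finset.Ico (0 : ℤ) N, ∑ j ∈ Finset.Ico (0 : ℤ) N,
      log (sin (π * (c j - c i) / L)) :=
  calc -(N ^ 2 * (L / (2 * δ)))
      = ∑ _i ∈ Finset.Ico (0 : ℤ) N, ∑ _j ∈ Finset.Ico (0 : ℤ) N, -(L / (2 * δ)) := by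
        simp only [Finset.sum_const, Int.card_Ico, sub_zero, Int.toNat_natCast, nsmul_eq_mul]
        ring
    _ ≤ _ := Finset.sum_le_sum fun _ hi ↦ Finset.sum_le_sum fun _ hj ↦
        hc.neg_div_le_log_sin hδ hgap hi hj

variable [NeZero N]

theorem gap_le_period (hc : IsStepConfig N L c) (i : ℤ) : c (i + 1) - c i ≤ L := by
  have hN : i + 1 ≤ i + N := by
    gcongr
    exact_mod_cast NeZero.one_le
  have := hc.strictMono.monotone hN
  rw [hc.apply_add_period] at this
  linarith

theorem le_gapPotential (hc : IsStepConfig N L c) (b : ℝ) (i : ℤ) :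
    -L + b / 2 * (c (i + 1) - c i)⁻¹ ^ 2 ≤ gapPotential b (c (i + 1) - c i) := by
  have hlog := log_le_sub_one_of_pos (hc.gap_pos i)
  rw [gapPotential]
  linarith [hc.gap_le_period i]

theorem le_sum_gapPotential (hc : IsStepConfig N L c) {b : ℝ} (hb : 0 ≤ b)
    (hi : i ∈ Finset.Ico (0 : ℤ) N) :
    b / 2 * (c (i + 1) - c i)⁻¹ ^ 2 - N * L ≤
      ∑ i ∈ Finset.Ico (0 : ℤ) N, gapPotential b (c (i + 1) - c i) :=
  calc b / 2 * (c (i + 1) - c i)⁻¹ ^ 2 - N * L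
      ≤ ∑ i ∈ Finset.Ico (0 : ℤ) N, b / 2 * (c (i + 1) - c i)⁻¹ ^ 2 - N * L := by
        gcongr
        exact Finset.single_le_sum (f := fun i ↦ b / 2 * (c (i + 1) - c i)⁻¹ ^ 2)
          (fun _ _ ↦ by positivity) hi
    _ = ∑ i ∈ Finset.Ico (0 : ℤ) N, (-L + b / 2 * (c (i + 1) - c i)⁻¹ ^ 2) := by
        rw [Finset.sum_add_distrib, Finset.sum_const, Int.card_Ico, sub_zero, Int.toNat_natCast,
          nsmul_eq_mul]
        ring
    _ ≤ _ := Finset.sum_le_sum fun i _ ↦ hc.le_gapPotential b i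

/-- With `g` the smallest gap, the elastic repulsion contributes `g⁻²`, which beats the at most
`g⁻¹` growth of the attractive logarithmic interaction. -/
theorem le_stepEnergy_of_forall_gap_le (hc : IsStepConfig N L c) (hi : i ∈ Finset.Ico (0 : ℤ) N)
    (hmin : ∀ j, c (i + 1) - c i ≤ c (j + 1) - c j) :
    (N : ℝ)⁻¹ ^ 2 / 2 * (c (i + 1) - c i)⁻¹ ^ 2 - N / 2 * (c (i + 1) - c i)⁻¹ - N * L ≤
      stepEnergy N L c := by
  have hL := hc.period_pos
  have hg := hc.gap_pos i
  have hinter := mul_le_mul_of_nonneg_left (hc.le_sum_log_sin hg hmin)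
    (show 0 ≤ (N : ℝ)⁻¹ / L by positivity)
  have hscale : (N : ℝ)⁻¹ / L * -(N ^ 2 * (L / (2 * (c (i + 1) - c i)))) =
      -(N / 2 * (c (i + 1) - c i)⁻¹) := by
    have hN : (N : ℝ) ≠ 0 := NeZero.ne _
    field_simp
  rw [stepEnergy]
  linarith [hc.le_sum_gapPotential (sq_nonneg (N : ℝ)⁻¹) hi]

theorem exists_forall_gap_le (hc : IsStepConfig N L c) :
    ∃ i ∈ Finset.Ico (0 : ℤ) N, ∀ j, c (i + 1) - c i ≤ c (j + 1) - c j := by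
  obtain ⟨i, hi, hmin⟩ := Finset.exists_min_image (Finset.Ico (0 : ℤ) N)
    (fun i ↦ c (i + 1) - c i) ⟨0, by simpa using NeZero.pos N⟩
  exact ⟨i, hi, forall_of_forall_mem_Ico_of_periodic
    (hc.periodic_gap.comp (c (i + 1) - c i ≤ ·)) hmin⟩

theorem le_stepEnergy (hc : IsStepConfig N L c) : -(N ^ 4 / 8 + N * L) ≤ stepEnergy N L c := by
  obtain ⟨i, hi, hmin⟩ := hc.exists_forall_gap_le
  have hN : (N : ℝ) ≠ 0 := NeZero.ne _
  have hquad (s : ℝ) : 0 ≤ (N : ℝ)⁻¹ ^ 2 / 2 * s ^ 2 - N / 2 * s + N ^ 4 / 8 :=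
    calc 0 ≤ ((N : ℝ)⁻¹ * s - N ^ 2 / 2) ^ 2 / 2 := by positivity
      _ = (N : ℝ)⁻¹ ^ 2 / 2 * s ^ 2 - N / 2 * s + N ^ 4 / 8 := by field_simp; ring
  linarith [hquad (c (i + 1) - c i)⁻¹, hc.le_stepEnergy_of_forall_gap_le hi hmin]

theorem abs_le_of_stepLyapunov_le (hc : IsStepConfig N L c) {M : ℝ}
    (hM : stepLyapunov N L c ≤ M) (hi : i ∈ Finset.Ico (0 : ℤ) N) :
    |c i| ≤ √(M + N ^ 4 / 8 + N * L) + L := by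
  rw [stepLyapunov] at hM
  have hsum : |∑ i ∈ Finset.Ico (0 : ℤ) N, c i| ≤ √(M + N ^ 4 / 8 + N * L) :=
    abs_le_sqrt (by linarith [hc.le_stepEnergy])
  have hbound := abs_le_abs_sum_add hi fun j hj ↦ (hc.abs_sub_lt_period hi hj).le
  linarith

end IsStepConfig

theorem exists_pos_le_gap_of_stepEnergy_le (N : ℕ) [NeZero N] (L M : ℝ) :
    ∃ δ > 0, ∀ c, IsStepConfig N L c → stepEnergy N L c ≤ M → ∀ i, δ ≤ c (i + 1) - c i := by
  have hA : 0 < (N : ℝ)⁻¹ ^ 2 / 2 := by have := NeZero.pos N; positivity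
  refine ⟨(1 + (N / 2 + |N * L + M|) / ((N : ℝ)⁻¹ ^ 2 / 2))⁻¹, by positivity,
    fun c hc hM i ↦ ?_⟩
  obtain ⟨i₀, hi₀, hmin⟩ := hc.exists_forall_gap_le
  refine (inv_le_of_inv_le₀ (hc.gap_pos i₀) ?_).trans (hmin i)
  refine le_one_add_div_of_mul_sq_le hA (by positivity) ?_
  linarith [hc.le_stepEnergy_of_forall_gap_le hi₀ hmin]

/-! ### The flow on periodic displacements -/

section Regularity

variable {F : Type*} [NormedAddCommGroup F] [NormedSpace ℝ F] {N : ℕ} {L : ℝ}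
  {c : F → ℤ → ℝ} {u : F} {n : WithTop ℕ∞}

theorem contDiffAt_fchem (hc : IsStepConfig N L (c u)) (hsmooth : ∀ i, ContDiffAt ℝ n (c · i) u)
    (i : ℤ) : ContDiffAt ℝ n (fun u ↦ fchem N L (c u) i) u := by
  have hgap (i : ℤ) : ContDiffAt ℝ n (fun u ↦ c u (i + 1) - c u i) u :=
    (hsmooth (i + 1)).sub (hsmooth i)
  have hforce (b : ℝ) (i : ℤ) : ContDiffAt ℝ n (fun u ↦ gapForce b (c u (i + 1) - c u i)) u :=
    (contDiffAt_const.div (hgap i) (hc.gap_pos i).ne').add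
      (contDiffAt_const.div ((hgap i).pow 3) (pow_ne_zero 3 (hc.gap_pos i).ne'))
  have hcot (j : ℤ) (hj : j ∈ Finset.Ico (i + 1) (i + N)) :
      ContDiffAt ℝ n (fun u ↦ cot (π * (c u j - c u i) / L)) u := by
    rw [Finset.mem_Ico] at hj
    have hpos : 0 < c u j - c u i := sub_pos.mpr (hc.strictMono (by lia))
    have hsin : sin (π * (c u j - c u i) / L) ≠ 0 :=
      sin_pi_mul_div_ne_zero hpos.ne' (by simpa [abs_of_pos hpos] using hc.sub_lt_period hj.2)
    have harg : ContDiffAt ℝ n (fun u ↦ π * (c u j - c u i) / L) u :=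
      (contDiffAt_const.mul ((hsmooth j).sub (hsmooth i))).div_const L
    simp only [cot_eq_cos_div_sin]
    exact harg.cos.div harg.sin hsin
  simp only [fchem_eq]
  exact (contDiffAt_const.mul (ContDiffAt.sum hcot)).add ((hforce _ i).sub (hforce _ (i - 1)))

theorem contDiffAt_Fvel (hc : IsStepConfig N L (c u)) (hsmooth : ∀ i, ContDiffAt ℝ n (c · i) u)
    (i : ℤ) : ContDiffAt ℝ n (fun u ↦ Fvel N L (c u) i) u := by
  have hflux (i : ℤ) : ContDiffAt ℝ n (fun u ↦ stepFlux N L (c u) i) u :=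
    ((contDiffAt_fchem hc hsmooth _).sub (contDiffAt_fchem hc hsmooth _)).div
      ((hsmooth _).sub (hsmooth _)) (hc.gap_pos i).ne'
  simp only [Fvel_eq]
  exact contDiffAt_const.mul ((hflux i).sub (hflux (i - 1)))

end Regularity

/-- The configuration obtained from `x` by displacing the steps periodically: `u k` is the common
displacement of all steps with index congruent to `k` modulo `N`. -/
def displace {N : ℕ} (x : ℤ → ℝ) (u : ZMod N → ℝ) (i : ℤ) : ℝ := x i + u i

/-- The step-flow system as a vector field on the finite-dimensional space of periodic
displacements of `x`. -/
noncomputable def displacementField {N : ℕ} (L : ℝ) (x : ℤ → ℝ) (u : ZMod N → ℝ) (k : ZMod N) : ℝ :=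
  Fvel N L (displace x u) k.cast

section Displacement

variable {N : ℕ} {L : ℝ} {x : ℤ → ℝ} {u : ZMod N → ℝ}

theorem displace_zero : displace (N := N) x 0 = x := by
  ext i
  simp [displace]

theorem displace_add_period (hx : ∀ i, x (i + N) = x i + L) (u : ZMod N → ℝ) (i : ℤ) :
    displace x u (i + N) = displace x u i + L := by
  simp only [displace, hx, Int.cast_add, Int.cast_natCast, CharP.cast_eq_zero, add_zero]
  ring

variable [NeZero N]

theorem displacementField_intCast (hu : IsStepConfig N L (displace x u)) (i : ℤ) :
    displacementField L x u i = Fvel N L (displace x u) i := by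
  rw [displacementField, ZMod.coe_intCast, map_emod_of_periodic hu.periodic_Fvel]

theorem contDiff_displace {n : WithTop ℕ∞} (i : ℤ) :
    ContDiff ℝ n fun u : ZMod N → ℝ ↦ displace x u i :=
  contDiff_const.add (contDiff_apply ℝ ℝ (i : ZMod N))

theorem continuous_displace (i : ℤ) : Continuous fun u : ZMod N → ℝ ↦ displace x u i :=
  (contDiff_displace (n := 0) i).continuous

theorem contDiffOn_displacementField (n : WithTop ℕ∞) :
    ContDiffOn ℝ n (displacementField (N := N) L x) {u | IsStepConfig N L (displace x u)} :=
  contDiffOn_pi.mpr fun _ _ hu ↦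
    (contDiffAt_Fvel hu (fun _ ↦ (contDiff_displace _).contDiffAt) _).contDiffWithinAt

theorem isOpen_setOf_isStepConfig_displace (hx : ∀ i, x (i + N) = x i + L) :
    IsOpen {u : ZMod N → ℝ | IsStepConfig N L (displace x u)} := by
  simp only [isStepConfig_iff_forall_mem_Ico (displace_add_period hx _), Set.ofPred_forall]
  exact isOpen_biInter_finset fun i _ ↦
    isOpen_lt (continuous_displace i) (continuous_displace (i + 1))

theorem hasFDerivAt_displace (u : ZMod N → ℝ) (i : ℤ) :
    HasFDerivAt (fun u : ZMod N → ℝ ↦ displace x u i)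
      (ContinuousLinearMap.proj (R := ℝ) (φ := fun _ ↦ ℝ) (i : ZMod N)) u :=
  (hasFDerivAt_apply (i : ZMod N) u).const_add (x i)

theorem hasFDerivAt_stepLyapunov_displace (hu : IsStepConfig N L (displace x u)) :
    HasFDerivAt (fun u : ZMod N → ℝ ↦ stepLyapunov N L (displace x u))
      (∑ i ∈ Finset.Ico (0 : ℤ) N, (fchem N L (displace x u) i +
        2 * ∑ j ∈ Finset.Ico (0 : ℤ) N, displace x u j) •
          ContinuousLinearMap.proj (R := ℝ) (φ := fun _ ↦ ℝ) (i : ZMod N)) u :=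
  hasFDerivAt_stepLyapunov hu (hasFDerivAt_displace u) fun i ↦ by simp

theorem fderiv_stepLyapunov_displacementField_nonpos (hu : IsStepConfig N L (displace x u)) :
    fderiv ℝ (fun u : ZMod N → ℝ ↦ stepLyapunov N L (displace x u)) u
      (displacementField L x u) ≤ 0 := by
  rw [(hasFDerivAt_stepLyapunov_displace hu).fderiv]
  simpa [displacementField_intCast hu, add_mul, Finset.sum_add_distrib, ← Finset.mul_sum,
    hu.sum_Fvel_eq_zero] using hu.sum_fchem_mul_Fvel_nonpos

theorem isCompact_setOf_le_gap_displace_inter_closedBall (x : ℤ → ℝ) (δ R : ℝ) :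
    IsCompact ({u : ZMod N → ℝ | ∀ i, δ ≤ displace x u (i + 1) - displace x u i} ∩
      Metric.closedBall 0 R) := by
  refine (isCompact_closedBall 0 R).inter_left ?_
  simp only [Set.ofPred_forall]
  exact isClosed_iInter fun i ↦ isClosed_le continuous_const
    ((continuous_displace (i + 1)).sub (continuous_displace i))

theorem exists_isCompact_sublevel_stepLyapunov (hx : IsStepConfig N L x) :
    ∃ K : Set (ZMod N → ℝ), IsCompact K ∧ K ⊆ {u | IsStepConfig N L (displace x u)} ∧
      ∀ u, IsStepConfig N L (displace x u) →
        stepLyapunov N L (displace x u) ≤ stepLyapunov N L x → u ∈ K := by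
  obtain ⟨δ, hδ, hgap⟩ := exists_pos_le_gap_of_stepEnergy_le N L (stepLyapunov N L x)
  set R := √(stepLyapunov N L x + N ^ 4 / 8 + N * L) + L
  refine ⟨_, isCompact_setOf_le_gap_displace_inter_closedBall x δ (R + R),
    fun u hu ↦ ?_, fun u hu hle ↦ ⟨?_, ?_⟩⟩
  · exact ⟨displace_add_period hx.apply_add_period u, fun i ↦ sub_pos.mp (hδ.trans_le (hu.1 i))⟩
  · exact hgap _ hu ((stepEnergy_le_stepLyapunov N L _).trans hle)
  · have hR : 0 ≤ R := add_nonneg (sqrt_nonneg _) hx.period_pos.le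
    rw [mem_closedBall_zero_iff, pi_norm_le_iff_of_nonneg (add_nonneg hR hR)]
    intro k
    have hk : (k.val : ℤ) ∈ Finset.Ico (0 : ℤ) N := by
      simpa only [Finset.mem_Ico, Nat.cast_nonneg, true_and, Nat.cast_lt] using k.val_lt
    have hdiff : u k = displace x u k.val - x k.val := by simp [displace]
    rw [hdiff]
    exact (norm_sub_le _ _).trans (add_le_add (hu.abs_le_of_stepLyapunov_le hle hk)
      (hx.abs_le_of_stepLyapunov_le le_rfl hk))

theorem exists_hasDerivAt_displacementField (hx : IsStepConfig N L x) :
    ∃ γ : ℝ → ZMod N → ℝ, γ 0 = 0 ∧ ∀ t, 0 ≤ t → IsStepConfig N L (displace x (γ t)) ∧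
      HasDerivAt γ (displacementField L x (γ t)) t := by
  obtain ⟨K, hK, hKU, hsublevel⟩ := exists_isCompact_sublevel_stepLyapunov hx
  exact exists_hasDerivAt_of_lyapunov (V := fun u ↦ stepLyapunov N L (displace x u))
    (isOpen_setOf_isStepConfig_displace hx.apply_add_period)
    (by simpa [displace_zero] using hx) (contDiffOn_displacementField 1)
    (fun u hu ↦ (hasFDerivAt_stepLyapunov_displace hu).differentiableAt.differentiableWithinAt)
    (fun u hu ↦ fderiv_stepLyapunov_displacementField_nonpos hu) hK hKU
    (by simpa [displace_zero] using hsublevel)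

end Displacement

/-- Global existence for the step-flow ODE system: for any `N ≥ 2`, `L > 0`
and any strictly ordered `L`-periodic initial data, there is a global-in-time `C¹` solution
which stays a step configuration (`x_{i+N} = x_i + L`, `x_i < x_{i+1}`) for all `t ≥ 0`. -/
theorem stmt_7 (N : ℕ) (hN : 2 ≤ N) (L : ℝ) (hL : 0 < L) (x0 : ℤ → ℝ)
    (hper0 : ∀ i : ℤ, x0 (i + (N:ℤ)) = x0 i + L) (hmono0 : ∀ i : ℤ, x0 i < x0 (i + 1)) :
    ∃ x : ℝ → ℤ → ℝ,
      (∀ i : ℤ, x 0 i = x0 i) ∧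
      (∀ t ∈ Set.Ici (0:ℝ), ∀ i : ℤ, x t (i + (N:ℤ)) = x t i + L ∧ x t i < x t (i + 1)) ∧
      (∀ i : ℤ, ∀ t ∈ Set.Ici (0:ℝ),
        HasDerivWithinAt (fun s => x s i) (Fvel N L (x t) i) (Set.Ici 0) t) := by
  have : NeZero N := ⟨by lia⟩
  obtain ⟨γ, hγ₀, hγ⟩ := exists_hasDerivAt_displacementField ⟨hper0, hmono0⟩
  refine ⟨fun t ↦ displace x0 (γ t), fun i ↦ ?_, fun t ht i ↦ ?_, fun i t ht ↦ ?_⟩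
  · simp only [hγ₀, displace_zero]
  · exact ⟨(hγ t ht).1.apply_add_period i, (hγ t ht).1.lt_apply_add_one i⟩
  · obtain ⟨hconfig, hderiv⟩ := hγ t ht
    rw [← displacementField_intCast hconfig]
    exact ((hasDerivAt_pi.mp hderiv i).const_add (x0 i)).hasDerivWithinAt
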